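/- The family 𝓕(Paw, Claw) of all finite simple graphs that are simultaneously induced Paw-free and induced Claw-free is not feasible, and likewise the family 𝓕(P_3 ∪ K_1, K_3 ∪ K_1) of all finite simple graphs that are simultaneously induced (P_3 ∪ K_1)-free and induced (K_3 ∪ K_1)-free is not feasible. -/

import Mathlib

open SimpleGraph

/-- `(n, m)` is a feasible pair for a family `F` of finite simple graphs
(given, for each number of vertices `n`, as a predicate on simple graphs on `Fin n`):
some member of the family has exactly `n` vertices and exactly `m` edges. -/
def FeasiblePair (F : ∀ n : ℕ, SimpleGraph (Fin n) → Prop) (n m : ℕ) : Prop :=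
  ∃ G : SimpleGraph (Fin n), F n G ∧ G.edgeSet.ncard = m

/-- A family of finite simple graphs is feasible if every pair `(n, m)` with
`n ≥ 1` and `0 ≤ m ≤ n(n-1)/2` is feasible for it. -/
def Feasible (F : ∀ n : ℕ, SimpleGraph (Fin n) → Prop) : Prop :=
  ∀ n m : ℕ, 1 ≤ n → m ≤ n * (n - 1) / 2 → FeasiblePair F n m

/-- `G` is contained in `H` as an induced subgraph: there is an injective map of the
vertices of `G` into the vertices of `H` under which adjacency in `H` holds
if and only if it holds in `G`. -/
def IndContains {α β : Type*} (G : SimpleGraph α) (H : SimpleGraph β) : Prop :=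
  ∃ f : α ↪ β, ∀ a b : α, H.Adj (f a) (f b) ↔ G.Adj a b

/-- The family `𝓕(G)` of all induced `G`-free finite simple graphs. -/
def IndFreeFamily {α : Type*} (G : SimpleGraph α) :
    ∀ n : ℕ, SimpleGraph (Fin n) → Prop :=
  fun _ H => ¬ IndContains G H

/-- The Paw: a triangle on the vertices `0, 1, 2` with the pendant edge `{2, 3}`. -/
def pawGraph : SimpleGraph (Fin 4) :=
  SimpleGraph.fromEdgeSet {s(0, 1), s(0, 2), s(1, 2), s(2, 3)}

/-- The Claw `K_{1,3}`: the center `0` joined to the three leaves `1, 2, 3`. -/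
def clawGraph : SimpleGraph (Fin 4) :=
  SimpleGraph.fromEdgeSet {s(0, 1), s(0, 2), s(0, 3)}

/-- `P_3 ∪ K_1`: the path `0 - 1 - 2` on three vertices plus the isolated vertex `3`. -/
def p3k1Graph : SimpleGraph (Fin 4) :=
  SimpleGraph.fromEdgeSet {s(0, 1), s(1, 2)}

/-- `K_3 ∪ K_1`: the triangle on `0, 1, 2` plus the isolated vertex `3`. -/
def k3k1Graph : SimpleGraph (Fin 4) :=
  SimpleGraph.fromEdgeSet {s(0, 1), s(0, 2), s(1, 2)}

/-!
The Paw and the Claw are the complements of `P_3 ∪ K_1` and `K_3 ∪ K_1`, so the two families are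
exchanged by complementation, and complementation preserves feasibility. For the second family, let
`n / 2 < m < n - 1`. A graph with `n` vertices and `m` edges has a vertex with two neighbours, and
it has too few edges to be connected; these three vertices together with a vertex of another
component induce `P_3 ∪ K_1` or `K_3 ∪ K_1`. The pair `(5, 3)` is the first one in this range.
-/

theorem ncard_edgeSet_add_ncard_edgeSet_compl {V : Type*} [Finite V] (G : SimpleGraph V) :
    G.edgeSet.ncard + Gᶜ.edgeSet.ncard = (Nat.card V).choose 2 := by
  classical
  have := Fintype.ofFinite V
  have hdisj : Disjoint G.edgeFinset Gᶜ.edgeFinset := disjoint_edgeFinset.2 disjoint_compl_right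
  simp only [← coe_edgeFinset, Set.ncard_coe_finset, Nat.card_eq_fintype_card]
  rw [← Finset.card_union_of_disjoint hdisj, ← edgeFinset_sup,
    ← card_edgeFinset_top_eq_card_choose_two]
  congr!
  exact sup_compl_eq_top

theorem Feasible.compl {F : ∀ n : ℕ, SimpleGraph (Fin n) → Prop} (hF : Feasible F) :
    Feasible fun n G => F n Gᶜ := by
  intro n m hn hm
  obtain ⟨G, hG, hcard⟩ := hF n (n * (n - 1) / 2 - m) hn (Nat.sub_le _ _)
  have hcompl := ncard_edgeSet_add_ncard_edgeSet_compl G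
  rw [Nat.card_fin, Nat.choose_two_right] at hcompl
  exact ⟨Gᶜ, by simpa only [compl_compl] using hG, by omega⟩

theorem Feasible.mono {F F' : ∀ n : ℕ, SimpleGraph (Fin n) → Prop} (hF : Feasible F)
    (h : ∀ n G, F n G → F' n G) : Feasible F' := fun n m hn hm =>
  (hF n m hn hm).imp fun G hG => ⟨h n G hG.1, hG.2⟩

theorem indContains_iff_isIndContained {α β : Type*} {G : SimpleGraph α} {H : SimpleGraph β} :
    IndContains G H ↔ G ⊴ H :=
  ⟨fun ⟨f, hf⟩ => ⟨⟨f, hf _ _⟩⟩, fun ⟨f⟩ => ⟨f.toEmbedding, fun _ _ => f.map_adj_iff⟩⟩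

theorem IndContains.compl_of_iso {α β γ : Type*} {G : SimpleGraph α} {G' : SimpleGraph β}
    {H : SimpleGraph γ} (h : IndContains G H) (e : G ≃g G'ᶜ) : IndContains G' Hᶜ := by
  rw [indContains_iff_isIndContained] at h ⊢
  simpa only [compl_compl] using (e.isIndContained'.trans h).compl

/-- `P_3 ∪ K_1` as the complement of the Paw, whose vertex `2` becomes the isolated one. -/
def p3k1GraphIsoComplPawGraph : p3k1Graph ≃g pawGraphᶜ where
  toFun := ![0, 3, 1, 2]
  invFun := ![0, 2, 3, 1]
  left_inv := by decide
  right_inv := by decide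
  map_rel_iff' {i j} := by
    fin_cases i <;> fin_cases j <;> simp [p3k1Graph, pawGraph]

/-- `K_3 ∪ K_1` as the complement of the Claw, whose center `0` becomes the isolated vertex. -/
def k3k1GraphIsoComplClawGraph : k3k1Graph ≃g clawGraphᶜ where
  toFun := ![1, 2, 3, 0]
  invFun := ![3, 0, 1, 2]
  left_inv := by decide
  right_inv := by decide
  map_rel_iff' {i j} := by
    fin_cases i <;> fin_cases j <;> simp [k3k1Graph, clawGraph]

section

variable {V : Type*} {G : SimpleGraph V}

theorem exists_adj_adj_ne_of_card_lt_two_mul_ncard_edgeSet [Finite V]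
    (hG : Nat.card V < 2 * G.edgeSet.ncard) : ∃ a b c, G.Adj a b ∧ G.Adj b c ∧ a ≠ c := by
  classical
  have := Fintype.ofFinite V
  rw [← coe_edgeFinset, Set.ncard_coe_finset, ← sum_degrees_eq_twice_card_edges,
    Nat.card_eq_fintype_card, Fintype.card_eq_sum_ones] at hG
  obtain ⟨b, -, hb⟩ := Finset.exists_lt_of_sum_lt hG
  obtain ⟨a, ha, c, hc, hac⟩ := Finset.one_lt_card.1 hb
  exact ⟨a, b, c, ((G.mem_neighborFinset b a).1 ha).symm, (G.mem_neighborFinset b c).1 hc, hac⟩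

theorem exists_not_reachable_of_ncard_edgeSet_add_one_lt_card
    (hG : G.edgeSet.ncard + 1 < Nat.card V) (b : V) : ∃ d, ¬ G.Reachable b d := by
  contrapose! hG
  have hconn : G.Connected := (connected_iff_exists_forall_reachable G).2 ⟨b, hG⟩
  exact hconn.card_vert_le_card_edgeSet_add_one

theorem indContains_of_forall_lt {ι : Type*} [LinearOrder ι] {P : SimpleGraph ι} (f : ι → V)
    (hf : ∀ i j, i < j → f i ≠ f j ∧ (G.Adj (f i) (f j) ↔ P.Adj i j)) : IndContains P G := by
  have injective : Function.Injective f := .of_lt_imp_ne fun i j hij => (hf i j hij).1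
  refine ⟨⟨f, injective⟩, fun i j => ?_⟩
  rcases lt_trichotomy i j with hij | rfl | hji
  · exact (hf i j hij).2
  · exact iff_of_false G.irrefl P.irrefl
  · rw [adj_comm, P.adj_comm]
    exact (hf j i hji).2

theorem indContains_p3k1Graph_or_k3k1Graph_of_not_reachable {a b c d : V} (hab : G.Adj a b)
    (hbc : G.Adj b c) (hac : a ≠ c) (hreach : ¬ G.Reachable b d) :
    IndContains p3k1Graph G ∨ IndContains k3k1Graph G := by
  have separated_of_reachable {x : V} (hx : G.Reachable b x) : x ≠ d ∧ ¬ G.Adj x d :=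
    ⟨fun h => hreach (h ▸ hx), fun h => hreach (hx.trans h.reachable)⟩
  have had := separated_of_reachable hab.symm.reachable
  have hbd := separated_of_reachable (.refl b)
  have hcd := separated_of_reachable hbc.reachable
  by_cases hadj : G.Adj a c
  · refine .inr (indContains_of_forall_lt ![a, b, c, d] ?_)
    simp [Fin.forall_fin_succ, k3k1Graph, hab, hbc, hac, hadj, hab.ne, hbc.ne, had, hbd, hcd]
  · refine .inl (indContains_of_forall_lt ![a, b, c, d] ?_)
    simp [Fin.forall_fin_succ, p3k1Graph, hab, hbc, hac, hadj, hab.ne, hbc.ne, had, hbd, hcd]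

theorem indContains_p3k1Graph_or_k3k1Graph_of_ncard_edgeSet
    (hlower : Nat.card V < 2 * G.edgeSet.ncard) (hupper : G.edgeSet.ncard + 1 < Nat.card V) :
    IndContains p3k1Graph G ∨ IndContains k3k1Graph G := by
  have : Finite V := Nat.finite_of_card_ne_zero (by omega)
  obtain ⟨a, b, c, hab, hbc, hac⟩ := exists_adj_adj_ne_of_card_lt_two_mul_ncard_edgeSet hlower
  obtain ⟨d, hbd⟩ := exists_not_reachable_of_ncard_edgeSet_add_one_lt_card hupper b
  exact indContains_p3k1Graph_or_k3k1Graph_of_not_reachable hab hbc hac hbd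

end

theorem not_feasiblePair_p3k1_k3k1 {n m : ℕ} (hlower : n < 2 * m) (hupper : m + 1 < n) :
    ¬ FeasiblePair (fun _ H => ¬ IndContains p3k1Graph H ∧ ¬ IndContains k3k1Graph H) n m := by
  rintro ⟨G, hG, rfl⟩
  exact not_or.2 hG <| indContains_p3k1Graph_or_k3k1Graph_of_ncard_edgeSet
    (by rwa [Nat.card_fin]) (by rwa [Nat.card_fin])

/-- The family `𝓕(Paw, Claw)` of graphs that are simultaneously induced Paw-free and
induced Claw-free is not feasible, and likewise `𝓕(P_3 ∪ K_1, K_3 ∪ K_1)` is not feasible. -/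
theorem not_feasible_pawClaw_and_not_feasible_p3k1_k3k1 :
    ¬ Feasible (fun _ H => ¬ IndContains pawGraph H ∧ ¬ IndContains clawGraph H) ∧
    ¬ Feasible (fun _ H => ¬ IndContains p3k1Graph H ∧ ¬ IndContains k3k1Graph H) := by
  have not_feasible_p3k1_k3k1 :
      ¬ Feasible (fun _ H => ¬ IndContains p3k1Graph H ∧ ¬ IndContains k3k1Graph H) :=
    fun h => not_feasiblePair_p3k1_k3k1 (by norm_num) (by norm_num)
      (h 5 3 (by norm_num) (by norm_num))
  refine ⟨fun h => not_feasible_p3k1_k3k1 <| h.compl.mono ?_, not_feasible_p3k1_k3k1⟩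
  rintro n G ⟨hpaw, hclaw⟩
  exact ⟨fun hp3k1 => hpaw (hp3k1.compl_of_iso p3k1GraphIsoComplPawGraph),
    fun hk3k1 => hclaw (hk3k1.compl_of_iso k3k1GraphIsoComplClawGraph)⟩
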